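/- For every integer k ≥ 2 there exists a function C_k : ℝ × ℝ → ℝ such that for every T > 0, every smooth solution u of the 1-dimensional Schrödinger flow with Neumann boundary conditions on [0,T] with initial data u₀ = u(·,0), and every integer 0 ≤ i ≤ k, one has sup_{t ∈ [0,T]} ‖∂_t^i u(·,t)‖²_{H^{2(k−i)+1}} ≤ C_k(‖u₀‖²_{H^{2k+1}}, T). -/

import Mathlib

open MeasureTheory Set

noncomputable section

abbrev E3 := EuclideanSpace ℝ (Fin 3)

/-- The cross product on `EuclideanSpace ℝ (Fin 3)`. -/
def cross3 (a b : E3) : E3 :=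
  (WithLp.equiv 2 (Fin 3 → ℝ)).symm
    (crossProduct ((WithLp.equiv 2 (Fin 3 → ℝ)) a) ((WithLp.equiv 2 (Fin 3 → ℝ)) b))

/-- Partial derivative in the space variable of `u = u x t`. -/
def pdx (u : ℝ → ℝ → E3) : ℝ → ℝ → E3 := fun x t => deriv (fun y => u y t) x

/-- Partial derivative in the time variable of `u = u x t`. -/
def pdt (u : ℝ → ℝ → E3) : ℝ → ℝ → E3 := fun x t => deriv (fun s => u x s) t

/-- `u` is a smooth solution of the 1-dimensional Schrödinger flow with Neumann
boundary conditions on `[0,1] × [0,T]`. -/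
def IsSol (T : ℝ) (u : ℝ → ℝ → E3) : Prop :=
  ContDiff ℝ (⊤ : ℕ∞) (fun p : ℝ × ℝ => u p.1 p.2) ∧
  (∀ x ∈ Icc (0:ℝ) 1, ∀ t ∈ Icc (0:ℝ) T, ‖u x t‖ = 1) ∧
  (∀ x ∈ Icc (0:ℝ) 1, ∀ t ∈ Icc (0:ℝ) T, pdt u x t = cross3 (u x t) (pdx (pdx u) x t)) ∧
  (∀ t ∈ Icc (0:ℝ) T, pdx u 0 t = 0 ∧ pdx u 1 t = 0)

/-- Squared `L²` norm on `[0,1]`. -/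
def L2sq (f : ℝ → E3) : ℝ := ∫ x in (0:ℝ)..1, ‖f x‖ ^ 2

/-- Squared `H^k` Sobolev norm on `[0,1]`. -/
def Hsq (k : ℕ) (f : ℝ → E3) : ℝ :=
  ∑ j ∈ Finset.range (k + 1), ∫ x in (0:ℝ)..1, ‖deriv^[j] f x‖ ^ 2


theorem c0 (a b : E3) : cross3 a b 0 = a 1 * b 2 - a 2 * b 1 := by
  simp [cross3, crossProduct]
theorem c1 (a b : E3) : cross3 a b 1 = a 2 * b 0 - a 0 * b 2 := by
  simp [cross3, crossProduct]
theorem c2 (a b : E3) : cross3 a b 2 = a 0 * b 1 - a 1 * b 0 := by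
  simp [cross3, crossProduct]
theorem inn (a b : E3) : inner ℝ a b = a 0 * b 0 + a 1 * b 1 + a 2 * b 2 := by
  simp [PiLp.inner_apply, Fin.sum_univ_three]; ring
theorem nsq (a : E3) : ‖a‖^2 = a 0 * a 0 + a 1 * a 1 + a 2 * a 2 := by
  rw [← real_inner_self_eq_norm_sq, inn]

theorem cross_ext {a b : E3} (h0 : a 0 = b 0) (h1 : a 1 = b 1) (h2 : a 2 = b 2) : a = b := by
  ext i; fin_cases i <;> assumption

def crossL : E3 →ₗ[ℝ] E3 →ₗ[ℝ] E3 :=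
  LinearMap.mk₂ ℝ cross3
    (by intro a b c; apply cross_ext <;> simp [c0, c1, c2] <;> ring)
    (by intro a b c; apply cross_ext <;> simp [c0, c1, c2] <;> ring)
    (by intro a b c; apply cross_ext <;> simp [c0, c1, c2] <;> ring)
    (by intro a b c; apply cross_ext <;> simp [c0, c1, c2] <;> ring)

theorem cross_deriv {f g : ℝ → E3} {f' g' : E3} {x : ℝ} (hf : HasDerivAt f f' x)
    (hg : HasDerivAt g g' x) :
    HasDerivAt (fun y => cross3 (f y) (g y)) (cross3 f' (g x) + cross3 (f x) g') x := by
  have := ContinuousLinearMap.hasDerivAt_of_bilinear (B := LinearMap.toContinuousBilinearMap crossL) (fun _ => hf) (fun _ => hg)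
  rw [add_comm]
  exact this

theorem cross_cont {X : Type*} [TopologicalSpace X] {f g : X → E3} (hf : Continuous f) (hg : Continuous g) :
    Continuous (fun y => cross3 (f y) (g y)) := 
  (LinearMap.toContinuousBilinearMap crossL).continuous₂.comp (hf.prodMk hg)

theorem cross_norm (a b : E3) : ‖cross3 a b‖^2 + (inner ℝ a b)^2 = ‖a‖^2 * ‖b‖^2 := by
  simp only [nsq, inn, c0, c1, c2]; ring

theorem cross_self_zero (a : E3) : cross3 a a = 0 := by
  apply cross_ext <;> simp [c0, c1, c2] <;> ring

theorem hasDeriv_uniq {E : Type*} [NormedAddCommGroup E] [NormedSpace ℝ E] {f g : ℝ → E} {f' g' : E}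
    {a b x : ℝ} (hab : a < b) (hx : x ∈ Icc a b) (hf : HasDerivAt f f' x) (hg : HasDerivAt g g' x)
    (h : ∀ y ∈ Icc a b, f y = g y) : f' = g' :=
  (uniqueDiffOn_Icc hab x hx).eq_deriv _ hf.hasDerivWithinAt
    (hg.hasDerivWithinAt.congr h (h x hx))

def Sm (f : ℝ → ℝ → E3) : Prop := ContDiff ℝ (⊤ : ℕ∞) (fun p : ℝ × ℝ => f p.1 p.2)

theorem Sm.hasFD {f : ℝ → ℝ → E3} (h : Sm f) (p : ℝ × ℝ) :
    HasFDerivAt (fun p : ℝ × ℝ => f p.1 p.2) (fderiv ℝ (fun p : ℝ × ℝ => f p.1 p.2) p) p :=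
  (h.differentiable (by simp) p).hasFDerivAt

theorem Sm.dx0 {f : ℝ → ℝ → E3} (h : Sm f) (x t : ℝ) :
    HasDerivAt (fun y => f y t) (fderiv ℝ (fun p : ℝ × ℝ => f p.1 p.2) (x, t) (1, 0)) x := by
  have h2 : HasDerivAt (fun y : ℝ => (y, t)) ((1 : ℝ), (0 : ℝ)) x :=
    (hasDerivAt_id x).prodMk (hasDerivAt_const x t)
  exact (h.hasFD (x, t)).comp_hasDerivAt x h2

theorem Sm.dt0 {f : ℝ → ℝ → E3} (h : Sm f) (x t : ℝ) :
    HasDerivAt (fun s => f x s) (fderiv ℝ (fun p : ℝ × ℝ => f p.1 p.2) (x, t) (0, 1)) t := by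
  have h2 : HasDerivAt (fun y : ℝ => (x, y)) ((0 : ℝ), (1 : ℝ)) t :=
    (hasDerivAt_const t x).prodMk (hasDerivAt_id t)
  exact (h.hasFD (x, t)).comp_hasDerivAt t h2

theorem Sm.pdx_eq {f : ℝ → ℝ → E3} (h : Sm f) (x t : ℝ) :
    pdx f x t = fderiv ℝ (fun p : ℝ × ℝ => f p.1 p.2) (x, t) (1, 0) := (h.dx0 x t).deriv

theorem Sm.pdt_eq {f : ℝ → ℝ → E3} (h : Sm f) (x t : ℝ) :
    pdt f x t = fderiv ℝ (fun p : ℝ × ℝ => f p.1 p.2) (x, t) (0, 1) := (h.dt0 x t).deriv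

theorem Sm.dx {f : ℝ → ℝ → E3} (h : Sm f) (x t : ℝ) :
    HasDerivAt (fun y => f y t) (pdx f x t) x := by
  rw [h.pdx_eq]; exact h.dx0 x t

theorem Sm.dt {f : ℝ → ℝ → E3} (h : Sm f) (x t : ℝ) :
    HasDerivAt (fun s => f x s) (pdt f x t) t := by
  rw [h.pdt_eq]; exact h.dt0 x t

theorem Sm.fd {f : ℝ → ℝ → E3} (h : Sm f) :
    ContDiff ℝ (⊤ : ℕ∞) (fderiv ℝ (fun p : ℝ × ℝ => f p.1 p.2)) :=
  ContDiff.fderiv_right (m := (⊤ : ℕ∞)) h (by simp)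

theorem Sm.pdx {f : ℝ → ℝ → E3} (h : Sm f) : Sm (pdx f) := by
  have : (fun p : ℝ × ℝ => _root_.pdx f p.1 p.2) =
      fun p => fderiv ℝ (fun p : ℝ × ℝ => f p.1 p.2) p (1, 0) := by
    ext1 p; exact h.pdx_eq p.1 p.2
  unfold Sm; rw [this]
  exact h.fd.clm_apply contDiff_const

theorem Sm.pdt {f : ℝ → ℝ → E3} (h : Sm f) : Sm (pdt f) := by
  have : (fun p : ℝ × ℝ => _root_.pdt f p.1 p.2) =
      fun p => fderiv ℝ (fun p : ℝ × ℝ => f p.1 p.2) p (0, 1) := by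
    ext1 p; exact h.pdt_eq p.1 p.2
  unfold Sm; rw [this]
  exact h.fd.clm_apply contDiff_const

theorem Sm.comm {f : ℝ → ℝ → E3} (h : Sm f) : _root_.pdt (_root_.pdx f) = _root_.pdx (_root_.pdt f) := by
  have e1 : (fun p : ℝ × ℝ => _root_.pdx f p.1 p.2) =
      fun p => fderiv ℝ (fun p : ℝ × ℝ => f p.1 p.2) p (1, 0) := by
    ext1 p; exact h.pdx_eq p.1 p.2
  have e2 : (fun p : ℝ × ℝ => _root_.pdt f p.1 p.2) =
      fun p => fderiv ℝ (fun p : ℝ × ℝ => f p.1 p.2) p (0, 1) := by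
    ext1 p; exact h.pdt_eq p.1 p.2
  funext x t
  rw [h.pdx.pdt_eq, h.pdt.pdx_eq, e1, e2]
  have hd := (h.fd.differentiable (by simp) (x, t)).hasFDerivAt
  have k : ∀ v : ℝ × ℝ, fderiv ℝ (fun p => fderiv ℝ (fun p : ℝ × ℝ => f p.1 p.2) p v) (x, t) =
      (fderiv ℝ (fderiv ℝ (fun p : ℝ × ℝ => f p.1 p.2)) (x, t)).flip v := by
    intro v
    have := hd.clm_apply (hasFDerivAt_const v (x, t))
    rw [this.fderiv]; simp
  rw [k, k]
  have hs : IsSymmSndFDerivAt ℝ (fun p : ℝ × ℝ => f p.1 p.2) (x, t) :=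
    (ContDiff.contDiffAt h).isSymmSndFDerivAt (by
      rw [minSmoothness_of_isRCLikeNormedField]; exact WithTop.coe_le_coe.2 (le_top : (2 : ℕ∞) ≤ ⊤))
  simpa using hs (0, 1) (1, 0)

/-- mixed derivatives -/
def W (u : ℝ → ℝ → E3) (i j : ℕ) : ℝ → ℝ → E3 := pdx^[j] (pdt^[i] u)

theorem W_zero (u : ℝ → ℝ → E3) : W u 0 0 = u := rfl

theorem W_succx (u : ℝ → ℝ → E3) (i j : ℕ) : W u i (j + 1) = pdx (W u i j) := by
  unfold W; rw [Function.iterate_succ_apply']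

theorem W_sm {u : ℝ → ℝ → E3} (h : Sm u) (i j : ℕ) : Sm (W u i j) := by
  induction j with
  | zero =>
    induction i with
    | zero => exact h
    | succ i ih =>
      have : W u (i+1) 0 = pdt (W u i 0) := by
        simp only [W, Function.iterate_zero, id]; rw [Function.iterate_succ_apply']
      rw [this]; exact ih.pdt
  | succ j ih => rw [W_succx]; exact ih.pdx

theorem W_succt {u : ℝ → ℝ → E3} (h : Sm u) (i j : ℕ) : W u (i+1) j = pdt (W u i j) := by
  induction j with
  | zero => simp only [W, Function.iterate_zero, id]; rw [Function.iterate_succ_apply']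
  | succ j ih => rw [W_succx, ih, W_succx, (W_sm h i j).comm]

theorem W_dx {u : ℝ → ℝ → E3} (h : Sm u) (i j : ℕ) (x t : ℝ) :
    HasDerivAt (fun y => W u i j y t) (W u i (j+1) x t) x := by
  rw [W_succx]; exact (W_sm h i j).dx x t

theorem W_dt {u : ℝ → ℝ → E3} (h : Sm u) (i j : ℕ) (x t : ℝ) :
    HasDerivAt (fun s => W u i j x s) (W u (i+1) j x t) t := by
  rw [W_succt h]; exact (W_sm h i j).dt x t

theorem W_cont {u : ℝ → ℝ → E3} (h : Sm u) (i j : ℕ) :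
    Continuous (fun p : ℝ × ℝ => W u i j p.1 p.2) := ContDiff.continuous (W_sm h i j)

theorem W_contx {u : ℝ → ℝ → E3} (h : Sm u) (i j : ℕ) (t : ℝ) :
    Continuous (fun x : ℝ => W u i j x t) := 
  (W_cont h i j).comp (f := fun x : ℝ => (x, t)) (by fun_prop)

theorem deriv_iter (f : ℝ → ℝ → E3) (j : ℕ) (x t : ℝ) :
    deriv^[j] (fun y => f y t) x = (pdx^[j] f) x t := by
  induction j generalizing x with
  | zero => rfl
  | succ j ih =>
    rw [Function.iterate_succ_apply', Function.iterate_succ_apply']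
    have : deriv^[j] (fun y => f y t) = fun y => (pdx^[j] f) y t := by ext1 y; exact ih y
    rw [this]; rfl

theorem Hsq_eq (u : ℝ → ℝ → E3) (k i : ℕ) (t : ℝ) :
    Hsq k (fun x => (pdt^[i] u) x t) = ∑ j ∈ Finset.range (k+1), ∫ x in (0:ℝ)..1, ‖W u i j x t‖^2 := by
  unfold Hsq; simp only [deriv_iter]; rfl

/-- differentiation under the integral sign -/
theorem dint {g g' : ℝ → ℝ → ℝ} (hg : Continuous (fun p : ℝ × ℝ => g p.1 p.2))
    (hg' : Continuous (fun p : ℝ × ℝ => g' p.1 p.2))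
    (hd : ∀ x t, HasDerivAt (fun s => g x s) (g' x t) t) (t : ℝ) :
    HasDerivAt (fun s => ∫ x in (0:ℝ)..1, g x s) (∫ x in (0:ℝ)..1, g' x t) t := by
  have hc : IsCompact (Icc (0:ℝ) 1 ×ˢ Icc (t-1) (t+1)) := isCompact_Icc.prod isCompact_Icc
  obtain ⟨M, hM⟩ := hc.exists_bound_of_continuousOn hg'.continuousOn
  have hx : ∀ s, Continuous (fun x => g x s) := fun s =>
    hg.comp (f := fun x : ℝ => (x, s)) (by fun_prop)
  have hx' : ∀ s, Continuous (fun x => g' x s) := fun s =>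
    hg'.comp (f := fun x : ℝ => (x, s)) (by fun_prop)
  refine (intervalIntegral.hasDerivAt_integral_of_dominated_loc_of_deriv_le
    (F := fun s x => g x s) (F' := fun s x => g' x s) (bound := fun _ => M)
    (s := Icc (t-1) (t+1)) (Icc_mem_nhds (by linarith) (by linarith))
    (Filter.Eventually.of_forall fun s => (hx s).aestronglyMeasurable)
    ((hx t).intervalIntegrable _ _) (hx' t).aestronglyMeasurable
    (Filter.Eventually.of_forall fun x hxx s hs => ?_) (by simp)
    (Filter.Eventually.of_forall fun x _ s _ => hd x s)).2
  rw [uIoc_of_le zero_le_one] at hxx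
  exact hM (x, s) ⟨⟨hxx.1.le, hxx.2⟩, hs⟩

theorem gron {φ φ' : ℝ → ℝ} {K T : ℝ} (hd : ∀ t ∈ Icc 0 T, HasDerivAt φ (φ' t) t)
    (hb : ∀ t ∈ Icc 0 T, φ' t ≤ K * φ t) (t : ℝ) (ht : t ∈ Icc 0 T) :
    φ t ≤ φ 0 * Real.exp (K * t) := by
  have hT : (0:ℝ) ≤ T := ht.1.trans ht.2
  have hD : ∀ s ∈ Icc 0 T, HasDerivAt (fun s => φ s * Real.exp (-(K * s)))
      (φ' s * Real.exp (-(K*s)) + φ s * (Real.exp (-(K*s)) * (-(K * 1)))) s := by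
    intro s hs
    exact (hd s hs).mul ((((hasDerivAt_id s).const_mul K).neg).exp)
  have ha : AntitoneOn (fun s => φ s * Real.exp (-(K * s))) (Icc 0 T) := by
    apply antitoneOn_of_deriv_nonpos (convex_Icc 0 T)
    · exact fun s hs => (hD s hs).continuousAt.continuousWithinAt
    · exact fun s hs => (hD s (interior_subset hs)).differentiableAt.differentiableWithinAt
    · intro s hs
      rw [(hD s (interior_subset hs)).deriv]
      have := hb s (interior_subset hs)
      have e := Real.exp_pos (-(K*s))
      nlinarith
  have := ha ⟨le_refl _, hT⟩ ht ht.1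
  simp only [mul_zero, neg_zero, Real.exp_zero, mul_one] at this
  rw [Real.exp_neg] at this
  have e := Real.exp_pos (K*t)
  rwa [← div_eq_mul_inv, div_le_iff₀ e] at this

/-- Sobolev -/
theorem sob {f f' : ℝ → E3} (hf : ∀ x, HasDerivAt f (f' x) x) (hc : Continuous f') {e : ℝ} (he : 0 < e)
    (x : ℝ) (hx : x ∈ Icc (0:ℝ) 1) :
    ‖f x‖^2 ≤ (1 + 1/e) * (∫ y in (0:ℝ)..1, ‖f y‖^2) + e * ∫ y in (0:ℝ)..1, ‖f' y‖^2 := by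
  have hfc : Continuous f := continuous_iff_continuousAt.2 fun x => (hf x).continuousAt
  have hd : ∀ y, HasDerivAt (fun y => ‖f y‖^2) (2 * inner ℝ (f y) (f' y)) y := fun y => (hf y).norm_sq
  have hi : Continuous (fun y => 2 * inner ℝ (f y) (f' y)) := by fun_prop
  have hG : Continuous (fun y => 1/e * ‖f y‖^2 + e * ‖f' y‖^2) := by fun_prop
  have hpt : ∀ y, |2 * inner ℝ (f y) (f' y)| ≤ 1/e * ‖f y‖^2 + e * ‖f' y‖^2 := by
    intro y
    have h1 := abs_real_inner_le_norm (f y) (f' y)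
    rw [abs_mul, abs_two]
    have h2 : 0 ≤ e * (‖f y‖/e - ‖f' y‖)^2 := by positivity
    have h3 : e * (‖f y‖/e - ‖f' y‖)^2 = 1/e * ‖f y‖^2 + e * ‖f' y‖^2 - 2 * (‖f y‖ * ‖f' y‖) := by
      field_simp; ring
    linarith
  have key : ∀ y ∈ Icc (0:ℝ) 1, ‖f x‖^2 ≤ ‖f y‖^2 + ∫ z in (0:ℝ)..1, (1/e * ‖f z‖^2 + e * ‖f' z‖^2) := by
    intro y hy
    have := intervalIntegral.integral_eq_sub_of_hasDerivAt (fun z (_ : z ∈ uIcc y x) => hd z) (hi.intervalIntegrable _ _)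
    have h1 : |∫ z in y..x, 2 * inner ℝ (f z) (f' z)| ≤ |∫ z in y..x, (1/e * ‖f z‖^2 + e * ‖f' z‖^2)| := by
      have := intervalIntegral.norm_integral_le_abs_of_norm_le (μ := volume) (a := y) (b := x)
        (f := fun z => 2 * inner ℝ (f z) (f' z))
        (Filter.Eventually.of_forall fun z => hpt z) (hG.intervalIntegrable _ _)
      simpa using this
    have h2 : |∫ z in y..x, (1/e * ‖f z‖^2 + e * ‖f' z‖^2)| ≤ |∫ z in (0:ℝ)..1, (1/e * ‖f z‖^2 + e * ‖f' z‖^2)| := by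
      apply intervalIntegral.abs_integral_mono_interval
      · rw [uIoc_of_le zero_le_one]
        intro z hz
        rw [mem_uIoc] at hz
        rcases hz with hz | hz
        · exact ⟨lt_of_le_of_lt hy.1 hz.1, hz.2.trans hx.2⟩
        · exact ⟨lt_of_le_of_lt hx.1 hz.1, hz.2.trans hy.2⟩
      · exact Filter.Eventually.of_forall fun z => by simp only [Pi.zero_apply]; positivity
      · exact hG.intervalIntegrable _ _
    have h3 : 0 ≤ ∫ z in (0:ℝ)..1, (1/e * ‖f z‖^2 + e * ‖f' z‖^2) :=
      intervalIntegral.integral_nonneg zero_le_one fun z _ => by positivity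
    rw [abs_of_nonneg h3] at h2
    have := (le_abs_self _).trans (h1.trans h2)
    linarith
  have := intervalIntegral.integral_mono_on (μ := volume) zero_le_one (f := fun _ => ‖f x‖^2)
    (by simp) (Continuous.intervalIntegrable (by fun_prop) _ _) key
  rw [intervalIntegral.integral_add (Continuous.intervalIntegrable (by fun_prop) _ _) (by simp)] at this
  rw [intervalIntegral.integral_add (Continuous.intervalIntegrable (by fun_prop) _ _) (Continuous.intervalIntegrable (by fun_prop) _ _)] at this
  simp only [intervalIntegral.integral_const, intervalIntegral.integral_const_mul] at this
  simp at this
  rw [one_div]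
  linarith

theorem IsSol.sm {T : ℝ} {u : ℝ → ℝ → E3} (h : IsSol T u) : Sm u := h.1

theorem IsSol.eq0 {T : ℝ} {u : ℝ → ℝ → E3} (h : IsSol T u) (x : ℝ) (hx : x ∈ Icc (0:ℝ) 1) (t : ℝ)
    (ht : t ∈ Icc (0:ℝ) T) : W u 1 0 x t = cross3 (W u 0 0 x t) (W u 0 2 x t) := h.2.2.1 x hx t ht

/-- remainder terms of the differentiated equation -/
inductive RC : ℕ → ((ℝ → ℝ → E3) → ℝ → ℝ → E3) → Prop
  | zero (n : ℕ) : RC n (fun _ _ _ => 0)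
  | base (n a b : ℕ) (ha : 2 ≤ a) (hb : 2 ≤ b) (h : a + b = n) :
      RC n (fun u x t => cross3 (W u 0 a x t) (W u 0 b x t))
  | add (n : ℕ) (F G : (ℝ → ℝ → E3) → ℝ → ℝ → E3) (hF : RC n F) (hG : RC n G) :
      RC n (fun u x t => F u x t + G u x t)

theorem RC.smul {n : ℕ} {F : (ℝ → ℝ → E3) → ℝ → ℝ → E3} (h : RC n F) (m : ℕ) :
    RC n (fun u x t => m • F u x t) := by
  induction m with
  | zero => simpa using RC.zero n
  | succ m ih => simpa only [add_smul, one_smul] using RC.add n _ _ ih h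

theorem RC.deriv {n : ℕ} {F : (ℝ → ℝ → E3) → ℝ → ℝ → E3} (h : RC n F) :
    ∃ G, RC (n+1) G ∧ ∀ u, Sm u → ∀ x t, HasDerivAt (fun y => F u y t) (G u x t) x := by
  induction h with
  | zero => exact ⟨_, RC.zero _, fun u hu x t => hasDerivAt_const x 0⟩
  | base a b ha hb h =>
    exact ⟨_, RC.add _ _ _ (RC.base (n+1) (a+1) b (by omega) (by omega) (by omega))
      (RC.base (n+1) a (b+1) (by omega) (by omega) (by omega)),
      fun u hu x t => cross_deriv (W_dx hu 0 a x t) (W_dx hu 0 b x t)⟩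
  | add F G hF hG ihF ihG =>
    obtain ⟨F', h1, h2⟩ := ihF
    obtain ⟨G', h3, h4⟩ := ihG
    exact ⟨_, RC.add _ _ _ h1 h3, fun u hu x t => (h2 u hu x t).add (h4 u hu x t)⟩

theorem eqn (m : ℕ) : ∃ R, RC (m+2) R ∧ ∀ T > (0:ℝ), ∀ u, IsSol T u → ∀ x ∈ Icc (0:ℝ) 1, ∀ t ∈ Icc (0:ℝ) T,
    W u 1 m x t = cross3 (W u 0 0 x t) (W u 0 (m+2) x t)
      + m • cross3 (W u 0 1 x t) (W u 0 (m+1) x t) + R u x t := by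
  induction m with
  | zero => exact ⟨_, RC.zero _, fun T hT u h x hx t ht => by simp [h.eq0 x hx t ht]⟩
  | succ m ih =>
    obtain ⟨R, hR, h⟩ := ih
    obtain ⟨G, hG, hd⟩ := hR.deriv
    rcases Nat.eq_zero_or_pos m with rfl | hm
    · refine ⟨_, hG, fun T hT u hu x hx t ht => ?_⟩
      have := hasDeriv_uniq zero_lt_one hx (W_dx hu.sm 1 0 x t)
        (((cross_deriv (W_dx hu.sm 0 0 x t) (W_dx hu.sm 0 2 x t)).add
          ((cross_deriv (W_dx hu.sm 0 1 x t) (W_dx hu.sm 0 1 x t)).const_smul (0:ℕ))).add (hd u hu.sm x t))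
        (fun y hy => h T hT u hu y hy t ht)
      rw [this]; simp; abel
    refine ⟨_, RC.add _ _ _ hG ((RC.base (m+1+2) 2 (m+1) (by omega) (by omega) (by omega)).smul m), fun T hT u hu x hx t ht => ?_⟩
    have := hasDeriv_uniq zero_lt_one hx (W_dx hu.sm 1 m x t)
        (((cross_deriv (W_dx hu.sm 0 0 x t) (W_dx hu.sm 0 (m+2) x t)).add
          ((cross_deriv (W_dx hu.sm 0 1 x t) (W_dx hu.sm 0 (m+1) x t)).const_smul (m:ℕ))).add (hd u hu.sm x t))
        (fun y hy => h T hT u hu y hy t ht)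
    rw [this]
    simp only [add_smul, one_smul, smul_add, zero_add, Nat.reduceAdd]
    rw [show m + 1 + 1 = m + 2 by rfl, show m + 1 + 2 = m + 2 + 1 by rfl]
    abel

/-- constraint terms -/
inductive PC : ℕ → ((ℝ → ℝ → E3) → ℝ → ℝ → ℝ) → Prop
  | zero (n : ℕ) : PC n (fun _ _ _ => 0)
  | base (n a b : ℕ) (ha : 1 ≤ a) (hb : 1 ≤ b) (h : a + b = n) :
      PC n (fun u x t => - inner ℝ (W u 0 a x t) (W u 0 b x t))
  | add (n : ℕ) (F G : (ℝ → ℝ → E3) → ℝ → ℝ → ℝ) (hF : PC n F) (hG : PC n G) :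
      PC n (fun u x t => F u x t + G u x t)

theorem PC.deriv {n : ℕ} {F : (ℝ → ℝ → E3) → ℝ → ℝ → ℝ} (h : PC n F) :
    ∃ G, PC (n+1) G ∧ ∀ u, Sm u → ∀ x t, HasDerivAt (fun y => F u y t) (G u x t) x := by
  induction h with
  | zero => exact ⟨_, PC.zero _, fun u hu x t => hasDerivAt_const x 0⟩
  | base a b ha hb h =>
    refine ⟨_, PC.add _ _ _ (PC.base (n+1) a (b+1) (by omega) (by omega) (by omega))
      (PC.base (n+1) (a+1) b (by omega) (by omega) (by omega)),
      fun u hu x t => ?_⟩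
    have := ((W_dx hu 0 a x t).inner ℝ (W_dx hu 0 b x t)).neg
    rwa [neg_add] at this
  | add F G hF hG ihF ihG =>
    obtain ⟨F', h1, h2⟩ := ihF
    obtain ⟨G', h3, h4⟩ := ihG
    exact ⟨_, PC.add _ _ _ h1 h3, fun u hu x t => (h2 u hu x t).add (h4 u hu x t)⟩

theorem IsSol.one {T : ℝ} {u : ℝ → ℝ → E3} (h : IsSol T u) (x : ℝ) (hx : x ∈ Icc (0:ℝ) 1) (t : ℝ)
    (ht : t ∈ Icc (0:ℝ) T) : ‖W u 0 0 x t‖^2 = 1 := by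
  rw [W_zero, h.2.1 x hx t ht]; norm_num

theorem IsSol.orth {T : ℝ} {u : ℝ → ℝ → E3} (h : IsSol T u) (x : ℝ) (hx : x ∈ Icc (0:ℝ) 1) (t : ℝ)
    (ht : t ∈ Icc (0:ℝ) T) : inner ℝ (W u 0 0 x t) (W u 0 1 x t) = 0 := by
  have := hasDeriv_uniq zero_lt_one hx (W_dx h.sm 0 0 x t).norm_sq (hasDerivAt_const x (1:ℝ))
    (fun y hy => h.one y hy t ht)
  simpa using this

theorem constr (m : ℕ) : ∃ P, PC (m+1) P ∧ ∀ T > (0:ℝ), ∀ u, IsSol T u → ∀ x ∈ Icc (0:ℝ) 1, ∀ t ∈ Icc (0:ℝ) T,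
    inner ℝ (W u 0 0 x t) (W u 0 (m+1) x t) = P u x t := by
  induction m with
  | zero => exact ⟨_, PC.zero _, fun T hT u h x hx t ht => h.orth x hx t ht⟩
  | succ m ih =>
    obtain ⟨P, hP, h⟩ := ih
    obtain ⟨G, hG, hd⟩ := hP.deriv
    refine ⟨_, PC.add _ _ _ hG (PC.base (m+1+1) 1 (m+1) (by omega) (by omega) (by omega)), fun T hT u hu x hx t ht => ?_⟩
    have := hasDeriv_uniq zero_lt_one hx ((W_dx hu.sm 0 0 x t).inner ℝ (W_dx hu.sm 0 (m+1) x t)) (hd u hu.sm x t)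
        (fun y hy => h T hT u hu y hy t ht)
    rw [← this]
    simp

theorem RC.odd {n : ℕ} {F : (ℝ → ℝ → E3) → ℝ → ℝ → E3} (h : RC n F) (hn : Odd n) {u : ℝ → ℝ → E3} {x t : ℝ}
    (hz : ∀ a, a + 2 ≤ n → Odd a → W u 0 a x t = 0) : F u x t = 0 := by
  induction h with
  | zero => rfl
  | base a b ha hb h =>
    subst h
    rcases Nat.even_or_odd a with h | h
    · have hb' : Odd b := by
        rcases Nat.even_or_odd b with h' | h'
        · exact absurd (h.add h') (Nat.not_even_iff_odd.2 hn)
        · exact h'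
      simp only [hz b (by omega) hb']
      apply cross_ext <;> simp [c0, c1, c2]
    · simp only [hz a (by omega) h]
      apply cross_ext <;> simp [c0, c1, c2]
  | add F G hF hG ihF ihG => simp [ihF, ihG]

theorem PC.odd {n : ℕ} {F : (ℝ → ℝ → E3) → ℝ → ℝ → ℝ} (h : PC n F) (hn : Odd n) {u : ℝ → ℝ → E3} {x t : ℝ}
    (hz : ∀ a, a + 1 ≤ n → Odd a → W u 0 a x t = 0) : F u x t = 0 := by
  induction h with
  | zero => rfl
  | base a b ha hb h =>
    subst h
    rcases Nat.even_or_odd a with h | h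
    · have hb' : Odd b := by
        rcases Nat.even_or_odd b with h' | h'
        · exact absurd (h.add h') (Nat.not_even_iff_odd.2 hn)
        · exact h'
      simp [hz b (by omega) hb']
    · simp [hz a (by omega) h]
  | add F G hF hG ihF ihG => simp [ihF, ihG]

theorem bdry {T : ℝ} (hT : 0 < T) {u : ℝ → ℝ → E3} (hu : IsSol T u) (x : ℝ) (hx : x = 0 ∨ x = 1) (m : ℕ) :
    Odd m → ∀ t ∈ Icc (0:ℝ) T, W u 0 m x t = 0 := by
  have hx' : x ∈ Icc (0:ℝ) 1 := by rcases hx with rfl | rfl <;> simp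
  induction m using Nat.strong_induction_on with
  | _ m ih =>
    intro hm t ht
    rcases Nat.lt_or_ge m 2 with h2 | h2
    · have : m = 1 := by rcases hm with ⟨r, rfl⟩; omega
      subst this
      rcases hx with rfl | rfl
      · exact (hu.2.2.2 t ht).1
      · exact (hu.2.2.2 t ht).2
    · obtain ⟨l, rfl⟩ : ∃ l, m = l + 2 := ⟨m - 2, by omega⟩
      have hl : Odd l := by rcases hm with ⟨r, hr⟩; exact ⟨r - 1, by omega⟩
      obtain ⟨R, hR, h⟩ := eqn l
      obtain ⟨P, hP, hh⟩ := constr (l+1)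
      have hz : ∀ a, a + 1 ≤ l + 2 → Odd a → W u 0 a x t = 0 := fun a ha hao => ih a (by omega) hao t ht
      have h1 := h T hT u hu x hx' t ht
      have h3 := hh T hT u hu x hx' t ht
      rw [hR.odd hm fun a ha => hz a (by omega)] at h1
      rw [hP.odd hm hz] at h3
      have h4 : W u 1 l x t = 0 := hasDeriv_uniq hT ht (W_dt hu.sm 0 l x t) (hasDerivAt_const t (0:E3))
        (fun s hs => ih l (by omega) hl s hs)
      have h5 : cross3 (W u 0 1 x t) (W u 0 (l+1) x t) = 0 := by
        rw [hz 1 (by omega) odd_one]; apply cross_ext <;> simp [c0, c1, c2]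
      rw [h4, h5] at h1
      simp only [smul_zero, add_zero] at h1
      have h6 := cross_norm (W u 0 0 x t) (W u 0 (l+2) x t)
      rw [← h1, hu.one x hx' t ht, h3] at h6
      simpa using h6.symm

structure Hyp (u : ℝ → ℝ → E3) (m : ℕ) (x t κ Z g : ℝ) : Prop where
  k1 : 1 ≤ κ
  z1 : 1 ≤ Z
  lo : ∀ j, j + 2 ≤ m → ‖W u 0 j x t‖^2 ≤ κ
  hi : ∀ j, j < m → ‖W u 0 j x t‖^2 ≤ κ * Z
  gm : ‖W u 0 m x t‖^2 ≤ g
  gl : ∀ j, j < m → Z * ‖W u 0 j x t‖^2 ≤ g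

theorem Hyp.g0 {u : ℝ → ℝ → E3} {m : ℕ} {x t κ Z g : ℝ} (h : Hyp u m x t κ Z g) : 0 ≤ g :=
  (sq_nonneg _).trans h.gm

theorem amgm (a b : E3) : |inner ℝ a b| ≤ ‖a‖^2 + ‖b‖^2 := by
  have := abs_real_inner_le_norm a b
  nlinarith [sq_nonneg (‖a‖ - ‖b‖), sq_nonneg (‖a‖ + ‖b‖)]

theorem cross_le (a b : E3) : ‖cross3 a b‖^2 ≤ ‖a‖^2 * ‖b‖^2 := by
  have := cross_norm a b
  nlinarith [sq_nonneg (inner ℝ a b)]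

theorem inner_sq_le (a b : E3) : (inner ℝ a b)^2 ≤ ‖a‖^2 * ‖b‖^2 := by
  have := cross_norm a b
  nlinarith [sq_nonneg (‖cross3 a b‖)]

theorem Hyp.mid {u : ℝ → ℝ → E3} {m : ℕ} {x t κ Z g : ℝ} (h : Hyp u m x t κ Z g) {a b : ℕ}
    (ha : a < m) (hb : b < m) : ‖W u 0 a x t‖^2 * ‖W u 0 b x t‖^2 ≤ κ * g := by
  have h1 := h.hi a ha
  have h2 := h.gl b hb
  have h3 := h.k1
  calc _ ≤ κ * Z * ‖W u 0 b x t‖^2 := by gcongr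
    _ = κ * (Z * ‖W u 0 b x t‖^2) := by ring
    _ ≤ _ := by gcongr

theorem RC.bd {m n : ℕ} {R : (ℝ → ℝ → E3) → ℝ → ℝ → E3} (hR : RC n R) (hn : n = m + 2) (hm : 3 ≤ m) :
    ∃ c, 0 ≤ c ∧ ∀ u x t κ Z g, Hyp u m x t κ Z g →
      |inner ℝ (W u 0 m x t) (R u x t)| ≤ c * κ^2 * g := by
  induction hR with
  | zero => exact ⟨0, le_refl _, fun u x t κ Z g h => by simp⟩
  | base a b ha hb h =>
    refine ⟨2, by norm_num, fun u x t κ Z g hh => ?_⟩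
    have g0 := hh.g0
    have k1 := hh.k1
    by_cases h1 : a = m
    · subst h1
      have : inner ℝ (W u 0 a x t) (cross3 (W u 0 a x t) (W u 0 b x t)) = 0 := by
        rw [inn, c0, c1, c2]; ring
      rw [this, abs_zero]; positivity
    by_cases h2 : b = m
    · subst h2
      have : inner ℝ (W u 0 b x t) (cross3 (W u 0 a x t) (W u 0 b x t)) = 0 := by
        rw [inn, c0, c1, c2]; ring
      rw [this, abs_zero]; positivity
    have h3 := hh.mid (a := a) (b := b) (by omega) (by omega)
    have h4 := amgm (W u 0 m x t) (cross3 (W u 0 a x t) (W u 0 b x t))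
    have h5 := cross_le (W u 0 a x t) (W u 0 b x t)
    have h6 := hh.gm
    have : κ ≤ κ^2 := by nlinarith
    have : κ * g ≤ κ^2 * g := by gcongr
    have : 1 * g ≤ κ * g := by gcongr
    linarith
  | add F G hF hG ihF ihG =>
    obtain ⟨c, hc, h⟩ := ihF
    obtain ⟨d, hd, h'⟩ := ihG
    refine ⟨c + d, by positivity, fun u x t κ Z g hh => ?_⟩
    rw [inner_add_right]
    have := abs_add_le (inner ℝ (W u 0 m x t) (F u x t)) (inner ℝ (W u 0 m x t) (G u x t))
    have h1 := h u x t κ Z g hh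
    have h2 := h' u x t κ Z g hh
    linarith

theorem PC.bd1 {m n : ℕ} {P : (ℝ → ℝ → E3) → ℝ → ℝ → ℝ} (hP : PC n P) (hn : n = m + 1) (hm : 3 ≤ m) :
    ∃ c, 0 ≤ c ∧ ∀ u x t κ Z g, Hyp u m x t κ Z g → (P u x t)^2 ≤ c * κ^2 * g := by
  induction hP with
  | zero => exact ⟨0, le_refl _, fun u x t κ Z g h => by simp⟩
  | base a b ha hb h =>
    refine ⟨1, by norm_num, fun u x t κ Z g hh => ?_⟩
    have g0 := hh.g0
    have k1 := hh.k1
    have e1 : κ ≤ κ^2 := by nlinarith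
    have e2 : κ * g ≤ κ^2 * g := by gcongr
    have h0 := inner_sq_le (W u 0 a x t) (W u 0 b x t)
    rw [neg_sq]
    have key : ‖W u 0 a x t‖^2 * ‖W u 0 b x t‖^2 ≤ κ * g := by
      have h5 := hh.lo 1 (by omega)
      have h6 := hh.gm
      by_cases h1 : a = m
      · have : b = 1 := by omega
        subst h1 this
        rw [mul_comm]; gcongr
      by_cases h2 : b = m
      · have : a = 1 := by omega
        subst h2 this
        gcongr
      exact hh.mid (by omega) (by omega)
    linarith
  | add F G hF hG ihF ihG =>
    obtain ⟨c, hc, h⟩ := ihF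
    obtain ⟨d, hd, h'⟩ := ihG
    refine ⟨2 * c + 2 * d, by positivity, fun u x t κ Z g hh => ?_⟩
    have h1 := h u x t κ Z g hh
    have h2 := h' u x t κ Z g hh
    nlinarith [sq_nonneg (F u x t - G u x t)]

theorem PC.bd2 {m n : ℕ} {P : (ℝ → ℝ → E3) → ℝ → ℝ → ℝ} (hP : PC n P) (hn : n = m) (hm : 3 ≤ m) :
    ∃ c, 0 ≤ c ∧ ∀ u x t κ Z g, Hyp u m x t κ Z g → (P u x t)^2 * ‖W u 0 2 x t‖^2 ≤ c * κ^2 * g := by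
  induction hP with
  | zero => exact ⟨0, le_refl _, fun u x t κ Z g h => by simp⟩
  | base a b ha hb h =>
    refine ⟨1, by norm_num, fun u x t κ Z g hh => ?_⟩
    have g0 := hh.g0
    have k1 := hh.k1
    have h0 := inner_sq_le (W u 0 a x t) (W u 0 b x t)
    rw [neg_sq]
    have key : ‖W u 0 a x t‖^2 * ‖W u 0 b x t‖^2 * ‖W u 0 2 x t‖^2 ≤ κ * (κ * g) := by
      rcases le_total a b with h1 | h1
      · have h5 := hh.lo a (by omega)
        rw [mul_assoc]
        have := hh.mid (a := b) (b := 2) (by omega) (by omega)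
        gcongr
      · have h5 := hh.lo b (by omega)
        rw [mul_comm (‖W u 0 a x t‖^2), mul_assoc]
        have := hh.mid (a := a) (b := 2) (by omega) (by omega)
        gcongr
    have := mul_le_mul_of_nonneg_right h0 (sq_nonneg ‖W u 0 2 x t‖)
    linarith
  | add F G hF hG ihF ihG =>
    obtain ⟨c, hc, h⟩ := ihF
    obtain ⟨d, hd, h'⟩ := ihG
    refine ⟨2 * c + 2 * d, by positivity, fun u x t κ Z g hh => ?_⟩
    have h1 := h u x t κ Z g hh
    have h2 := h' u x t κ Z g hh
    have : (F u x t + G u x t)^2 ≤ 2 * (F u x t)^2 + 2 * (G u x t)^2 := by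
      nlinarith [sq_nonneg (F u x t - G u x t)]
    have := mul_le_mul_of_nonneg_right this (sq_nonneg ‖W u 0 2 x t‖)
    nlinarith

/-- derivative of the flux -/
def Dfl (k : ℝ) (a0 a1 a2 am am1 am2 : E3) : ℝ :=
  (inner ℝ am (cross3 a1 am1 + cross3 a0 am2) + inner ℝ am1 (cross3 a0 am1)) +
  k * ((inner ℝ a0 am1 + inner ℝ a1 am) * inner ℝ a0 (cross3 a1 am) +
    inner ℝ a0 am * (inner ℝ a0 (cross3 a2 am + cross3 a1 am1) + inner ℝ a1 (cross3 a1 am)))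

theorem alg (m : ℕ) (a0 a1 a2 am am1 am2 R : E3) (h1 : ‖a0‖^2 = 1) (h2 : inner ℝ a0 a1 = 0) :
    inner ℝ am (cross3 a0 am2 + m • cross3 a1 am1 + R) - Dfl (m - 1) a0 a1 a2 am am1 am2 =
    inner ℝ am R + ((m:ℝ) - 1) * (inner ℝ a0 am1 * inner ℝ am (cross3 a1 a0)
      - (inner ℝ a1 am + inner ℝ a0 am1) * inner ℝ a0 (cross3 a1 am)
      - inner ℝ a0 am * inner ℝ a0 (cross3 a2 am)) := by
  have key : inner ℝ am (cross3 a1 am1) = inner ℝ a0 am * inner ℝ a0 (cross3 a1 am1)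
      + inner ℝ a0 am1 * inner ℝ am (cross3 a1 a0) := by
    have e : ‖a0‖^2 * inner ℝ am (cross3 a1 am1) = inner ℝ a0 am * inner ℝ a0 (cross3 a1 am1)
      + inner ℝ a0 am1 * inner ℝ am (cross3 a1 a0) + inner ℝ a0 a1 * inner ℝ am (cross3 a0 am1) := by
      simp only [inn, nsq, c0, c1, c2]; ring
    rw [h1, h2] at e; linarith
  have z1 : inner ℝ am1 (cross3 a0 am1) = 0 := by simp only [inn, c0, c1, c2]; ring
  have z2 : inner ℝ a1 (cross3 a1 am) = 0 := by simp only [inn, c0, c1, c2]; ring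
  unfold Dfl
  rw [z1, z2]
  simp only [inner_add_right, ← Nat.cast_smul_eq_nsmul ℝ, real_inner_smul_right]
  linear_combination ((m:ℝ) - 1) * key

theorem ptwise (m : ℕ) (hm : 3 ≤ m) : ∃ c, 0 ≤ c ∧ ∀ T > (0:ℝ), ∀ u, IsSol T u → ∀ x ∈ Icc (0:ℝ) 1, ∀ t ∈ Icc (0:ℝ) T,
    ∀ κ Z g, Hyp u m x t κ Z g → 
    inner ℝ (W u 0 m x t) (W u 1 m x t) - Dfl (m - 1) (W u 0 0 x t) (W u 0 1 x t) (W u 0 2 x t)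
      (W u 0 m x t) (W u 0 (m+1) x t) (W u 0 (m+2) x t) ≤ c * κ^2 * g := by
  obtain ⟨R, hR, hE⟩ := eqn m
  obtain ⟨P, hP, hC⟩ := constr m
  obtain ⟨P', hP', hC'⟩ := constr (m-1)
  rw [Nat.sub_add_cancel (by omega : 1 ≤ m)] at hP' hC'
  obtain ⟨c1, hc1, b1⟩ := hR.bd rfl hm
  obtain ⟨c2, hc2, b2⟩ := hP.bd1 rfl hm
  obtain ⟨c3, hc3, b3⟩ := hP'.bd2 rfl hm
  refine ⟨c1 + m * (10 + 10 * c2 + c3), by positivity, fun T hT u hu x hx t ht κ Z g hh => ?_⟩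
  rw [hE T hT u hu x hx t ht, alg m _ _ _ _ _ _ _ (hu.one x hx t ht) (hu.orth x hx t ht)]
  have b1 := (le_abs_self _).trans (b1 u x t κ Z g hh)
  have b2 := b2 u x t κ Z g hh
  have b3 := b3 u x t κ Z g hh
  rw [← hC T hT u hu x hx t ht] at b2
  rw [← hC' T hT u hu x hx t ht] at b3
  have l1 := hh.lo 1 (by omega)
  have gm := hh.gm
  have g0 := hh.g0
  have k1 := hh.k1
  have hone := hu.one x hx t ht
  generalize W u 0 0 x t = a0 at *
  generalize W u 0 1 x t = a1 at *
  generalize W u 0 2 x t = a2 at *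
  generalize W u 0 m x t = am at *
  generalize W u 0 (m+1) x t = am1 at *
  have am_g : ‖a1‖^2 * ‖am‖^2 ≤ κ * g := by gcongr
  have e1 : κ ≤ κ^2 := by nlinarith
  have e2 : κ * g ≤ κ^2 * g := by gcongr
  have e3 : 1 * g ≤ κ * g := by gcongr
  have d1 : (inner ℝ am (cross3 a1 a0))^2 ≤ κ * g := by
    have e : (inner ℝ am (cross3 a1 a0))= inner ℝ a0 (cross3 am a1) := by simp only [inn, c0, _root_.c1, _root_.c2]; ring
    rw [e]
    have := inner_sq_le a0 (cross3 am a1)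
    have := cross_le am a1
    rw [hone] at *
    linarith
  have d2 : (inner ℝ a0 (cross3 a1 am))^2 ≤ κ * g := by
    have := inner_sq_le a0 (cross3 a1 am)
    have := cross_le a1 am
    rw [hone] at *
    linarith
  have d3 : (inner ℝ a1 am)^2 ≤ κ * g := (inner_sq_le _ _).trans am_g
  have d4 : |inner ℝ a0 am * inner ℝ a0 (cross3 a2 am)| ≤ c3 * κ^2 * g + g := by
    have e : inner ℝ a0 am * inner ℝ a0 (cross3 a2 am) = inner ℝ (inner ℝ a0 am • cross3 a0 a2) am := by
      rw [real_inner_smul_left]; congr 1; simp only [inn, c0, _root_.c1, _root_.c2]; ring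
    rw [e]
    have h1 := amgm (inner ℝ a0 am • cross3 a0 a2) am
    rw [norm_smul, mul_pow, Real.norm_eq_abs, sq_abs] at h1
    have h2 := cross_le a0 a2
    rw [hone, one_mul] at h2
    have := mul_le_mul_of_nonneg_left h2 (sq_nonneg (inner ℝ a0 am))
    linarith
  have f1 : inner ℝ a0 am1 * inner ℝ am (cross3 a1 a0)
      - (inner ℝ a1 am + inner ℝ a0 am1) * inner ℝ a0 (cross3 a1 am)
      - inner ℝ a0 am * inner ℝ a0 (cross3 a2 am) ≤ (10 + 10 * c2 + c3) * κ^2 * g := by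
    have := neg_abs_le (inner ℝ a0 am * inner ℝ a0 (cross3 a2 am))
    generalize inner ℝ a0 am * inner ℝ a0 (cross3 a2 am) = q4 at *
    generalize inner ℝ a0 am1 = q1 at *
    generalize inner ℝ am (cross3 a1 a0) = q2 at *
    generalize inner ℝ a0 (cross3 a1 am) = q3 at *
    generalize inner ℝ a1 am = q5 at *
    have : 0 ≤ c2 * κ^2 * g := by positivity
    nlinarith [sq_nonneg (q1 - q2), sq_nonneg (q5 + q3), sq_nonneg (q1 + q3)]
  have hm1 : (0:ℝ) ≤ (m:ℝ) - 1 := by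
    have : (3:ℝ) ≤ m := by exact_mod_cast hm
    linarith
  have f2 := mul_le_mul_of_nonneg_left f1 hm1
  have : 0 ≤ (10 + 10 * c2 + c3) * κ^2 * g := by positivity
  linarith

def nn (u : ℝ → ℝ → E3) (j : ℕ) (t : ℝ) : ℝ := ∫ x in (0:ℝ)..1, ‖W u 0 j x t‖^2

theorem nn_nonneg (u : ℝ → ℝ → E3) (j : ℕ) (t : ℝ) : 0 ≤ nn u j t :=
  intervalIntegral.integral_nonneg zero_le_one fun _ _ => sq_nonneg _

theorem nn_deriv {u : ℝ → ℝ → E3} (hu : Sm u) (j : ℕ) (t : ℝ) :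
    HasDerivAt (nn u j) (∫ x in (0:ℝ)..1, 2 * inner ℝ (W u 0 j x t) (W u 1 j x t)) t := by
  have := W_cont hu 0 j
  have := W_cont hu 1 j
  exact dint (g := fun x t => ‖W u 0 j x t‖^2) (g' := fun x t => 2 * inner ℝ (W u 0 j x t) (W u 1 j x t))
    (by fun_prop) (by fun_prop) (fun x t => (W_dt hu 0 j x t).norm_sq) t

theorem nn_sob {u : ℝ → ℝ → E3} (hu : Sm u) (j : ℕ) (t x : ℝ) (hx : x ∈ Icc (0:ℝ) 1) :
    ‖W u 0 j x t‖^2 ≤ 2 * nn u j t + nn u (j+1) t := by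
  have := sob (fun x => W_dx hu 0 j x t) (W_contx hu 0 (j+1) t) one_pos x hx
  unfold nn; linarith

theorem flux {u : ℝ → ℝ → E3} {T : ℝ} (hT : 0 < T) (hu : IsSol T u) (m : ℕ) (k : ℝ) (t : ℝ)
    (ht : t ∈ Icc (0:ℝ) T) :
    ∫ x in (0:ℝ)..1, Dfl k (W u 0 0 x t) (W u 0 1 x t) (W u 0 2 x t)
      (W u 0 m x t) (W u 0 (m+1) x t) (W u 0 (m+2) x t) = 0 := by
  have hd := fun x => W_dx hu.sm 0 0 x t
  have hd1 := fun x => W_dx hu.sm 0 1 x t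
  have hdm := fun x => W_dx hu.sm 0 m x t
  have hdm1 := fun x => W_dx hu.sm 0 (m+1) x t
  have := intervalIntegral.integral_eq_sub_of_hasDerivAt (a := 0) (b := 1) (fun x _ =>
    ((hdm x).inner ℝ (cross_deriv (hd x) (hdm1 x))).add
      ((((hd x).inner ℝ (hdm x)).mul ((hd x).inner ℝ (cross_deriv (hd1 x) (hdm x)))).const_mul k)) (by
      apply Continuous.intervalIntegrable
      have := fun j => W_contx hu.sm 0 j t
      have := fun i j => cross_cont (W_contx hu.sm 0 i t) (W_contx hu.sm 0 j t)
      fun_prop)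
  unfold Dfl
  simp only [zero_add] at this
  rw [this]
  have b : ∀ x, x = 0 ∨ x = 1 → inner ℝ (W u 0 m x t) (cross3 (W u 0 0 x t) (W u 0 (m+1) x t)) = 0 := by
    intro x hx
    rcases Nat.even_or_odd m with h | h
    · rw [bdry hT hu x hx (m+1) h.add_one t ht]; simp [inn, c0, c1, c2]
    · rw [bdry hT hu x hx m h t ht]; simp
  have b' : ∀ x, x = 0 ∨ x = 1 → inner ℝ (W u 0 0 x t) (cross3 (W u 0 1 x t) (W u 0 m x t)) = 0 := by
    intro x hx
    rw [bdry hT hu x hx 1 odd_one t ht]; simp [inn, c0, c1, c2]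
  simp [b, b']

theorem step (m : ℕ) (hm : 3 ≤ m) (A : ℝ) (hA : 0 ≤ A) : ∃ K, 0 ≤ K ∧ ∀ T > (0:ℝ), ∀ u, IsSol T u →
    (∀ j < m, ∀ t ∈ Icc (0:ℝ) T, nn u j t ≤ A) → ∀ t ∈ Icc (0:ℝ) T,
    1 + nn u m t ≤ (1 + nn u m 0) * Real.exp (K * t) := by
  obtain ⟨c, hc, hp⟩ := ptwise m hm
  refine ⟨2 * (c * (3*A+1)^2 * (1 + m * A)), by positivity, fun T hT u hu hj t ht => ?_⟩
  refine gron (φ := fun t => 1 + nn u m t) (fun t _ => (nn_deriv hu.sm m t).const_add 1) ?_ t ht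
  clear t ht
  intro t ht
  set Z := 1 + nn u m t with hZ
  have hn0 := nn_nonneg u m t
  have cW := fun j => W_contx hu.sm 0 j t
  have cW' := fun j => W_contx hu.sm 1 j t
  have cX := fun i j => cross_cont (W_contx hu.sm 0 i t) (W_contx hu.sm 0 j t)
  have hgc : Continuous (fun x => ‖W u 0 m x t‖^2 + Z * ∑ j ∈ Finset.range m, ‖W u 0 j x t‖^2) := by
    fun_prop
  have hpt : ∀ x ∈ Icc (0:ℝ) 1, 2 * (inner ℝ (W u 0 m x t) (W u 1 m x t)) - 2 * Dfl (m - 1) (W u 0 0 x t) (W u 0 1 x t) (W u 0 2 x t)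
      (W u 0 m x t) (W u 0 (m+1) x t) (W u 0 (m+2) x t) ≤ 
      2 * (c * (3*A+1)^2 * (‖W u 0 m x t‖^2 + Z * ∑ j ∈ Finset.range m, ‖W u 0 j x t‖^2)) := by
    intro x hx
    have hH : Hyp u m x t (3*A+1) Z (‖W u 0 m x t‖^2 + Z * ∑ j ∈ Finset.range m, ‖W u 0 j x t‖^2) := by
      have hs := nn_sob hu.sm (t := t) (x := x) (hx := hx)
      have hlo : ∀ j, j + 2 ≤ m → ‖W u 0 j x t‖^2 ≤ 3*A+1 := by
        intro j hjm
        have := hs j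
        have := hj j (by omega) t ht
        have := hj (j+1) (by omega) t ht
        linarith
      refine ⟨by linarith, by linarith, hlo, ?_, ?_, ?_⟩
      · intro j hjm
        by_cases h : j + 2 ≤ m
        · have := hlo j h; nlinarith
        · have e : j + 1 = m := by omega
          have := hs j
          have := hj j (by omega) t ht
          rw [e] at *
          nlinarith
      · have : 0 ≤ Z * ∑ j ∈ Finset.range m, ‖W u 0 j x t‖^2 := by positivity
        linarith
      · intro j hjm
        have h1 : ‖W u 0 j x t‖^2 ≤ ∑ j ∈ Finset.range m, ‖W u 0 j x t‖^2 :=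
          Finset.single_le_sum (f := fun j => ‖W u 0 j x t‖^2) (fun _ _ => sq_nonneg _) (Finset.mem_range.2 hjm)
        have h2 : Z * ‖W u 0 j x t‖^2 ≤ Z * ∑ j ∈ Finset.range m, ‖W u 0 j x t‖^2 := by gcongr
        have := sq_nonneg ‖W u 0 m x t‖
        linarith
    have := hp T hT u hu x hx t ht _ _ _ hH
    linarith
  have hDc : Continuous (fun x => Dfl (m - 1) (W u 0 0 x t) (W u 0 1 x t) (W u 0 2 x t)
      (W u 0 m x t) (W u 0 (m+1) x t) (W u 0 (m+2) x t)) := by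
    unfold Dfl; fun_prop
  have hI := intervalIntegral.integral_mono_on (μ := volume) zero_le_one
    (Continuous.intervalIntegrable (by fun_prop) _ _) (Continuous.intervalIntegrable (by fun_prop) _ _) hpt
  rw [intervalIntegral.integral_sub (Continuous.intervalIntegrable (by fun_prop) _ _) (Continuous.intervalIntegrable (by fun_prop) _ _)] at hI
  rw [intervalIntegral.integral_const_mul (μ := volume) 2 (fun x => Dfl _ _ _ _ _ _ _), flux hT hu m _ t ht] at hI
  simp only [intervalIntegral.integral_const_mul] at hI ⊢
  rw [intervalIntegral.integral_add (Continuous.intervalIntegrable (by fun_prop) _ _) (Continuous.intervalIntegrable (by fun_prop) _ _),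
    intervalIntegral.integral_const_mul, intervalIntegral.integral_finsetSum (fun j _ => Continuous.intervalIntegrable (by fun_prop) _ _)] at hI
  have hsum : ∑ j ∈ Finset.range m, ∫ x in (0:ℝ)..1, ‖W u 0 j x t‖^2 ≤ m * A := by
    have := Finset.sum_le_card_nsmul (Finset.range m) (fun j => ∫ x in (0:ℝ)..1, ‖W u 0 j x t‖^2) A
      (fun j hjm => hj j (Finset.mem_range.1 hjm) t ht)
    simpa using this
  have h1 : (∫ x in (0:ℝ)..1, ‖W u 0 m x t‖^2) + Z * ∑ j ∈ Finset.range m, ∫ x in (0:ℝ)..1, ‖W u 0 j x t‖^2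
      ≤ (1 + m * A) * Z := by
    have h2 : (∫ x in (0:ℝ)..1, ‖W u 0 m x t‖^2) = nn u m t := rfl
    rw [h2]
    have : Z * ∑ j ∈ Finset.range m, ∫ x in (0:ℝ)..1, ‖W u 0 j x t‖^2 ≤ Z * (m * A) := by gcongr
    linarith
  have h2 := mul_le_mul_of_nonneg_left h1 (by positivity : 0 ≤ c * (3*A+1)^2)
  linarith

theorem RC.triv {n : ℕ} {R : (ℝ → ℝ → E3) → ℝ → ℝ → E3} (hR : RC n R) (hn : n ≤ 4) (u : ℝ → ℝ → E3) (x t : ℝ) :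
    R u x t = 0 := by
  induction hR with
  | zero => rfl
  | base a b ha hb h =>
    have h1 : a = 2 := by omega
    have h2 : b = 2 := by omega
    subst h1 h2; exact cross_self_zero _
  | add F G hF hG ihF ihG => simp [ihF, ihG]

theorem eqn12 {T : ℝ} (hT : 0 < T) {u : ℝ → ℝ → E3} (hu : IsSol T u) (m : ℕ) (hm : m ≤ 2) (x : ℝ) (hx : x ∈ Icc (0:ℝ) 1) (t : ℝ)
    (ht : t ∈ Icc (0:ℝ) T) : W u 1 m x t = cross3 (W u 0 0 x t) (W u 0 (m+2) x t)
      + m • cross3 (W u 0 1 x t) (W u 0 (m+1) x t) + 0 := by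
  obtain ⟨R, hR, h⟩ := eqn m
  rw [h T hT u hu x hx t ht, hR.triv (by omega)]

theorem p2 {T : ℝ} {u : ℝ → ℝ → E3} (hu : IsSol T u) (x : ℝ) (hx : x ∈ Icc (0:ℝ) 1) (t : ℝ)
    (ht : t ∈ Icc (0:ℝ) T) : inner ℝ (W u 0 0 x t) (W u 0 2 x t) = - ‖W u 0 1 x t‖^2 := by
  have := hasDeriv_uniq zero_lt_one hx ((W_dx hu.sm 0 0 x t).inner ℝ (W_dx hu.sm 0 1 x t)) (hasDerivAt_const x (0:ℝ))
    (fun y hy => hu.orth y hy t ht)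
  simp only [zero_add, real_inner_self_eq_norm_sq, Nat.reduceAdd] at this
  linarith

theorem p3 {T : ℝ} {u : ℝ → ℝ → E3} (hu : IsSol T u) (x : ℝ) (hx : x ∈ Icc (0:ℝ) 1) (t : ℝ)
    (ht : t ∈ Icc (0:ℝ) T) : inner ℝ (W u 0 0 x t) (W u 0 3 x t) = - 3 * inner ℝ (W u 0 1 x t) (W u 0 2 x t) := by
  have := hasDeriv_uniq zero_lt_one hx ((W_dx hu.sm 0 0 x t).inner ℝ (W_dx hu.sm 0 2 x t)) (W_dx hu.sm 0 1 x t).norm_sq.neg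
    (fun y hy => p2 hu y hy t ht)
  simp only [zero_add, Nat.reduceAdd] at this
  linarith

theorem low1 {T : ℝ} (hT : 0 < T) {u : ℝ → ℝ → E3} (hu : IsSol T u) (t : ℝ) (ht : t ∈ Icc (0:ℝ) T) :
    nn u 1 t ≤ nn u 1 0 := by
  have := gron (φ := nn u 1) (K := 0) (fun t _ => nn_deriv hu.sm 1 t) ?_ t ht
  · simpa using this
  clear t ht
  intro t ht
  rw [intervalIntegral.integral_const_mul]
  have : ∫ x in (0:ℝ)..1, inner ℝ (W u 0 1 x t) (W u 1 1 x t) = ∫ x in (0:ℝ)..1, Dfl ((1:ℕ)-1) (W u 0 0 x t) (W u 0 1 x t) (W u 0 2 x t)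
      (W u 0 1 x t) (W u 0 (1+1) x t) (W u 0 (1+2) x t) := by
    apply intervalIntegral.integral_congr
    intro x hx
    rw [uIcc_of_le zero_le_one] at hx
    dsimp only
    rw [eqn12 hT hu 1 (by omega) x hx t ht]
    have := alg 1 (W u 0 0 x t) (W u 0 1 x t) (W u 0 2 x t) (W u 0 1 x t) (W u 0 (1+1) x t) (W u 0 (1+2) x t) 0
      (hu.one x hx t ht) (hu.orth x hx t ht)
    rw [← sub_eq_zero, this]; simp
  rw [this, flux hT hu 1 _ t ht]; simp

theorem alg2 (a0 a1 a2 a3 a4 : E3) (h1 : ‖a0‖^2 = 1) (h2 : inner ℝ a0 a1 = 0) (h3 : inner ℝ a0 a2 = - ‖a1‖^2)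
    (h4 : inner ℝ a0 a3 = -3 * inner ℝ a1 a2) :
    2 * inner ℝ a2 (cross3 a0 a4 + 2 • cross3 a1 a3 + 0) -
      5/4 * (2 * ‖a1‖^2 * (2 * inner ℝ a1 (cross3 a0 a3 + 1 • cross3 a1 a2 + 0)))
    = 2 * Dfl (-3/2) a0 a1 a2 a2 a3 a4 := by
  have e : ‖a0‖^2 * inner ℝ a2 (cross3 a1 a3) = inner ℝ a0 a2 * inner ℝ a0 (cross3 a1 a3)
      + inner ℝ a0 a3 * inner ℝ a2 (cross3 a1 a0) + inner ℝ a0 a1 * inner ℝ a2 (cross3 a0 a3) := by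
      simp only [inn, nsq, c0, c1, c2]; ring
  rw [h1, h2, h3, h4] at e
  have z1 : inner ℝ a3 (cross3 a0 a3) = 0 := by simp only [inn, c0, c1, c2]; ring
  have z2 : inner ℝ a1 (cross3 a1 a2) = 0 := by simp only [inn, c0, c1, c2]; ring
  have z4 : inner ℝ a1 (cross3 a0 a3) = - inner ℝ a0 (cross3 a1 a3) := by simp only [inn, c0, c1, c2]; ring
  have z5 : inner ℝ a2 (cross3 a1 a0) = - inner ℝ a0 (cross3 a1 a2) := by simp only [inn, c0, c1, c2]; ring
  unfold Dfl
  rw [z5] at e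
  simp only [inner_add_right, ← Nat.cast_smul_eq_nsmul ℝ, real_inner_smul_right, inner_zero_right, cross_self_zero,
    z1, z2, z4, h3, h4]
  push_cast
  linear_combination 2 * e

theorem low2 (A : ℝ) (hA : 0 ≤ A) {T : ℝ} (hT : 0 < T) {u : ℝ → ℝ → E3} (hu : IsSol T u) (h1 : nn u 1 0 ≤ A)
    (h2 : nn u 2 0 ≤ A) (t : ℝ) (ht : t ∈ Icc (0:ℝ) T) :
    nn u 2 t ≤ 8/3 * (A + 5/4 * (A^2 * (1 + 2*(A+1)))) := by
  have W1 := W_cont hu.sm 0 1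
  have W2 := W_cont hu.sm 0 2
  have V1 := W_cont hu.sm 1 1
  have V2 := W_cont hu.sm 1 2
  have D := dint (g := fun x t => ‖W u 0 2 x t‖^2 - 5/4 * (‖W u 0 1 x t‖^2)^2)
    (g' := fun x t => 2 * inner ℝ (W u 0 2 x t) (W u 1 2 x t) -
      5/4 * (2 * ‖W u 0 1 x t‖^2 * (2 * inner ℝ (W u 0 1 x t) (W u 1 1 x t))))
    (by fun_prop) (by fun_prop) (fun x t => by
      have := ((W_dt hu.sm 0 2 x t).norm_sq).sub ((((W_dt hu.sm 0 1 x t).norm_sq).pow 2).const_mul (5/4))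
      simp at this
      exact this)
  have G := gron (K := 0) (T := T) (fun t _ => D t) ?_ t ht
  swap
  · intro t ht
    have : ∫ x in (0:ℝ)..1, (2 * inner ℝ (W u 0 2 x t) (W u 1 2 x t) -
      5/4 * (2 * ‖W u 0 1 x t‖^2 * (2 * inner ℝ (W u 0 1 x t) (W u 1 1 x t)))) =
      ∫ x in (0:ℝ)..1, 2 * Dfl (-3/2) (W u 0 0 x t) (W u 0 1 x t) (W u 0 2 x t)
      (W u 0 2 x t) (W u 0 (2+1) x t) (W u 0 (2+2) x t) := by
      apply intervalIntegral.integral_congr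
      intro x hx
      rw [uIcc_of_le zero_le_one] at hx
      dsimp only
      rw [eqn12 hT hu 1 (by omega) x hx t ht, eqn12 hT hu 2 (by omega) x hx t ht]
      exact alg2 _ _ _ _ _ (hu.one x hx t ht) (hu.orth x hx t ht) (p2 hu x hx t ht) (p3 hu x hx t ht)
    rw [this, intervalIntegral.integral_const_mul, flux hT hu 2 _ t ht]; simp
  simp only [zero_mul, Real.exp_zero, mul_one] at G
  have X := fun j t => W_contx hu.sm 0 j t
  have sp : ∀ t, ∫ x in (0:ℝ)..1, (‖W u 0 2 x t‖^2 - 5/4 * (‖W u 0 1 x t‖^2)^2) =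
      nn u 2 t - 5/4 * ∫ x in (0:ℝ)..1, (‖W u 0 1 x t‖^2)^2 := by
    intro t
    rw [intervalIntegral.integral_sub (Continuous.intervalIntegrable (by fun_prop) _ _) (Continuous.intervalIntegrable (by fun_prop) _ _),
      intervalIntegral.integral_const_mul]; rfl
  rw [sp, sp] at G
  have q0 : 0 ≤ ∫ x in (0:ℝ)..1, (‖W u 0 1 x 0‖^2)^2 :=
    intervalIntegral.integral_nonneg zero_le_one fun _ _ => sq_nonneg _
  have l1 := (low1 hT hu t ht).trans h1
  have n1 := nn_nonneg u 1 t
  have n2 := nn_nonneg u 2 t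
  have eA : 0 < 1/(2*(A+1)) := by positivity
  have q : ∫ x in (0:ℝ)..1, (‖W u 0 1 x t‖^2)^2 ≤ ∫ x in (0:ℝ)..1, ((1 + 2*(A+1)) * A + 1/(2*(A+1)) * nn u 2 t) * ‖W u 0 1 x t‖^2 := by
    apply intervalIntegral.integral_mono_on zero_le_one (Continuous.intervalIntegrable (by fun_prop) _ _) (Continuous.intervalIntegrable (by fun_prop) _ _)
    intro x hx
    have := sob (fun x => W_dx hu.sm 0 1 x t) (W_contx hu.sm 0 2 t) eA x hx
    rw [one_div_one_div] at this
    have h3 : (1 + 2*(A+1)) * nn u 1 t ≤ (1 + 2*(A+1)) * A := by gcongr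
    unfold nn at h3 ⊢
    rw [sq (‖W u 0 1 x t‖^2)]
    gcongr
    linarith
  rw [intervalIntegral.integral_const_mul] at q
  have q' : ((1 + 2*(A+1)) * A + 1/(2*(A+1)) * nn u 2 t) * nn u 1 t ≤ ((1 + 2*(A+1)) * A + 1/(2*(A+1)) * nn u 2 t) * A := by
    gcongr
  have q'' : 1/(2*(A+1)) * nn u 2 t * A ≤ 1/2 * nn u 2 t := by
    have : 1/(2*(A+1)) * A ≤ 1/2 := by
      rw [div_mul_eq_mul_div, div_le_div_iff₀ (by positivity) (by norm_num)]; linarith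
    nlinarith
  have : ∫ x in (0:ℝ)..1, ‖W u 0 1 x t‖^2 = nn u 1 t := rfl
  rw [this] at q
  linarith

theorem low0 {T : ℝ} {u : ℝ → ℝ → E3} (hu : IsSol T u) (t : ℝ) (ht : t ∈ Icc (0:ℝ) T) : nn u 0 t = 1 := by
  unfold nn
  have : ∫ x in (0:ℝ)..1, ‖W u 0 0 x t‖^2 = ∫ x in (0:ℝ)..1, (1:ℝ) := by
    apply intervalIntegral.integral_congr
    intro x hx
    rw [uIcc_of_le zero_le_one] at hx
    exact hu.one x hx t ht
  rw [this]; simp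

theorem allm (A : ℝ) (hA : 0 ≤ A) (T : ℝ) (hT : 0 < T) (m : ℕ) : ∃ K, 0 ≤ K ∧ ∀ u, IsSol T u → (∀ j ≤ m, nn u j 0 ≤ A) →
    ∀ j ≤ m, ∀ t ∈ Icc (0:ℝ) T, nn u j t ≤ K := by
  induction m with
  | zero =>
    refine ⟨1, by norm_num, fun u hu _ j hj t ht => ?_⟩
    obtain rfl : j = 0 := by omega
    exact (low0 hu t ht).le
  | succ m ih =>
    obtain ⟨K, hK, h⟩ := ih
    suffices hs : ∃ K', ∀ u, IsSol T u → (∀ j ≤ m+1, nn u j 0 ≤ A) →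
        ∀ t ∈ Icc (0:ℝ) T, nn u (m+1) t ≤ K' by
      obtain ⟨K', h'⟩ := hs
      refine ⟨max K K', le_max_of_le_left hK, fun u hu h0 j hj t ht => ?_⟩
      rcases Nat.lt_or_ge m j with h1 | h1
      · obtain rfl : j = m + 1 := by omega
        exact (h' u hu h0 t ht).trans (le_max_right _ _)
      · exact (h u hu (fun j hj => h0 j (by omega)) j h1 t ht).trans (le_max_left _ _)
    rcases Nat.lt_or_ge m 2 with h2 | h2
    · interval_cases m
      · exact ⟨A, fun u hu h0 t ht => (low1 hT hu t ht).trans (h0 1 (by omega))⟩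
      · exact ⟨_, fun u hu h0 t ht => low2 A hA hT hu (h0 1 (by omega)) (h0 2 (by omega)) t ht⟩
    · obtain ⟨L, hL, hs⟩ := step (m+1) (by omega) K hK
      refine ⟨(1 + A) * Real.exp (L * T), fun u hu h0 t ht => ?_⟩
      have h1 := hs T hT u hu (fun j hj t ht => h u hu (fun j hj => h0 j (by omega)) j (by omega) t ht) t ht
      have h3 := h0 (m+1) le_rfl
      have h4 : Real.exp (L * t) ≤ Real.exp (L * T) := Real.exp_le_exp.2 (mul_le_mul_of_nonneg_left ht.2 hL)
      have h5 : (1 + nn u (m+1) 0) * Real.exp (L * t) ≤ (1 + A) * Real.exp (L * T) := by gcongr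
      linarith

/-- mixed terms -/
inductive QC (I n : ℕ) : ((ℝ → ℝ → E3) → ℝ → ℝ → E3) → Prop
  | base (a b c d : ℕ) (ha : a ≤ I) (hc : c ≤ I) (h : 2 * a + b + (2 * c + d) = n) :
      QC I n (fun u x t => cross3 (W u a b x t) (W u c d x t))
  | add (F G : (ℝ → ℝ → E3) → ℝ → ℝ → E3) (hF : QC I n F) (hG : QC I n G) :
      QC I n (fun u x t => F u x t + G u x t)

theorem QC.dx {I n : ℕ} {F : (ℝ → ℝ → E3) → ℝ → ℝ → E3} (h : QC I n F) :
    ∃ G, QC I (n+1) G ∧ ∀ u, Sm u → ∀ x t, HasDerivAt (fun y => F u y t) (G u x t) x := by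
  induction h with
  | base a b c d ha hc h =>
    exact ⟨_, QC.add _ _ (QC.base a (b+1) c d ha hc (by omega)) (QC.base a b c (d+1) ha hc (by omega)),
      fun u hu x t => cross_deriv (W_dx hu a b x t) (W_dx hu c d x t)⟩
  | add F G hF hG ihF ihG =>
    obtain ⟨F', h1, h2⟩ := ihF
    obtain ⟨G', h3, h4⟩ := ihG
    exact ⟨_, QC.add _ _ h1 h3, fun u hu x t => (h2 u hu x t).add (h4 u hu x t)⟩

theorem QC.dt {I n : ℕ} {F : (ℝ → ℝ → E3) → ℝ → ℝ → E3} (h : QC I n F) :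
    ∃ G, QC (I+1) (n+2) G ∧ ∀ u, Sm u → ∀ x t, HasDerivAt (fun y => F u x y) (G u x t) t := by
  induction h with
  | base a b c d ha hc h =>
    exact ⟨_, QC.add _ _ (QC.base (a+1) b c d (by omega) (by omega) (by omega))
      (QC.base a b (c+1) d (by omega) (by omega) (by omega)),
      fun u hu x t => cross_deriv (W_dt hu a b x t) (W_dt hu c d x t)⟩
  | add F G hF hG ihF ihG =>
    obtain ⟨F', h1, h2⟩ := ihF
    obtain ⟨G', h3, h4⟩ := ihG
    exact ⟨_, QC.add _ _ h1 h3, fun u hu x t => (h2 u hu x t).add (h4 u hu x t)⟩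

theorem eqnt (i j : ℕ) : ∃ F, QC i (2 * (i+1) + j) F ∧ ∀ T > (0:ℝ), ∀ u, IsSol T u → ∀ x ∈ Icc (0:ℝ) 1,
    ∀ t ∈ Icc (0:ℝ) T, W u (i+1) j x t = F u x t := by
  induction j with
  | zero =>
    induction i with
    | zero => exact ⟨_, QC.base 0 0 0 2 le_rfl le_rfl rfl, fun T hT u hu x hx t ht => hu.eq0 x hx t ht⟩
    | succ i ih =>
      obtain ⟨F, hF, h⟩ := ih
      obtain ⟨G, hG, hd⟩ := hF.dt
      exact ⟨G, hG, fun T hT u hu x hx t ht => hasDeriv_uniq hT ht (W_dt hu.sm (i+1) 0 x t) (hd u hu.sm x t)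
        (fun s hs => h T hT u hu x hx s hs)⟩
  | succ j ih =>
    obtain ⟨F, hF, h⟩ := ih
    obtain ⟨G, hG, hd⟩ := hF.dx
    exact ⟨G, hG, fun T hT u hu x hx t ht => hasDeriv_uniq zero_lt_one hx (W_dx hu.sm (i+1) j x t) (hd u hu.sm x t)
        (fun s hs => h T hT u hu s hs t ht)⟩

/-- bound predicate: order `n`, value `v` (squared norm), top squared norm `s`. -/
def Bd (N n : ℕ) (K v s : ℝ) : Prop := v ≤ K * (1 + s) ∧ (n < N → v ≤ K)

theorem fin (N : ℕ) (hN : 0 < N) (K0 : ℝ) (hK0 : 0 ≤ K0) (i : ℕ) : ∀ j, 2 * i + j ≤ N → ∃ K, 0 ≤ K ∧ ∀ T > (0:ℝ), ∀ u, IsSol T u →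
    ∀ x ∈ Icc (0:ℝ) 1, ∀ t ∈ Icc (0:ℝ) T, (∀ l < N, ‖W u 0 l x t‖^2 ≤ K0) →
    Bd N (2 * i + j) K (‖W u i j x t‖^2) (‖W u 0 N x t‖^2) := by
  induction i using Nat.strong_induction_on with
  | _ i ih =>
    intro j hj
    rcases i with _ | i
    · refine ⟨K0 + 1, by positivity, fun T hT u hu x hx t ht hl => ?_⟩
      have s0 := sq_nonneg ‖W u 0 N x t‖
      rcases Nat.lt_or_ge j N with h | h
      · have := hl j h
        exact ⟨by nlinarith, fun _ => by linarith⟩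
      · obtain rfl : j = N := by omega
        exact ⟨by nlinarith, fun h => by omega⟩
    · obtain ⟨F, hF, h⟩ := eqnt i j
      suffices hs : ∀ n, n ≤ N → ∀ F, QC i n F → ∃ K, 0 ≤ K ∧ ∀ T > (0:ℝ), ∀ u, IsSol T u →
          ∀ x ∈ Icc (0:ℝ) 1, ∀ t ∈ Icc (0:ℝ) T, (∀ l < N, ‖W u 0 l x t‖^2 ≤ K0) →
          Bd N n K (‖F u x t‖^2) (‖W u 0 N x t‖^2) by
        obtain ⟨K, hK, hb⟩ := hs _ hj F hF
        refine ⟨K, hK, fun T hT u hu x hx t ht hl => ?_⟩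
        rw [h T hT u hu x hx t ht]
        exact hb T hT u hu x hx t ht hl
      intro n hn F hF
      induction hF with
      | base a b c d ha hc h =>
        obtain ⟨K1, hK1, b1⟩ := ih a (by omega) b (by omega)
        obtain ⟨K2, hK2, b2⟩ := ih c (by omega) d (by omega)
        refine ⟨K1 * K2, by positivity, fun T hT u hu x hx t ht hl => ?_⟩
        have b1 := b1 T hT u hu x hx t ht hl
        have b2 := b2 T hT u hu x hx t ht hl
        have hc := cross_le (W u a b x t) (W u c d x t)
        have s0 := sq_nonneg ‖W u 0 N x t‖
        generalize ‖W u 0 N x t‖^2 = s at *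
        have v1 := sq_nonneg ‖W u a b x t‖
        have v2 := sq_nonneg ‖W u c d x t‖
        generalize ‖W u a b x t‖^2 = p at *
        generalize ‖W u c d x t‖^2 = q at *
        constructor
        · rcases Nat.lt_or_ge (2 * a + b) N with h1 | h1
          · calc _ ≤ p * q := hc
              _ ≤ K1 * (K2 * (1 + s)) := mul_le_mul (b1.2 h1) b2.1 v2 hK1
              _ = _ := by ring
          · calc _ ≤ p * q := hc
              _ ≤ (K1 * (1 + s)) * K2 := mul_le_mul b1.1 (b2.2 (by omega)) v2 (by positivity)
              _ = _ := by ring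
        · intro hlt
          exact hc.trans (mul_le_mul (b1.2 (by omega)) (b2.2 (by omega)) v2 hK1)
      | add F G hF hG ihF ihG =>
        obtain ⟨K1, hK1, b1⟩ := ihF
        obtain ⟨K2, hK2, b2⟩ := ihG
        refine ⟨2 * K1 + 2 * K2, by positivity, fun T hT u hu x hx t ht hl => ?_⟩
        have b1 := b1 T hT u hu x hx t ht hl
        have b2 := b2 T hT u hu x hx t ht hl
        have hh : ‖F u x t + G u x t‖^2 ≤ 2 * ‖F u x t‖^2 + 2 * ‖G u x t‖^2 := by
          have := norm_add_le (F u x t) (G u x t)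
          have := norm_nonneg (F u x t + G u x t)
          nlinarith [sq_nonneg (‖F u x t‖ - ‖G u x t‖)]
        refine ⟨?_, fun hlt => ?_⟩
        · have := b1.1; have := b2.1; linarith
        · have := b1.2 hlt; have := b2.2 hlt; linarith

theorem mixed (N : ℕ) (hN : 0 < N) (A : ℝ) (hA : 0 ≤ A) (T : ℝ) (hT : 0 < T) (i j : ℕ) (hij : 2 * i + j ≤ N) :
    ∃ K, 0 ≤ K ∧ ∀ u, IsSol T u → (∀ j ≤ N, nn u j 0 ≤ A) → ∀ t ∈ Icc (0:ℝ) T,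
      ∫ x in (0:ℝ)..1, ‖W u i j x t‖^2 ≤ K := by
  obtain ⟨B, hB, h1⟩ := allm A hA T hT N
  obtain ⟨K, hK, h2⟩ := fin N hN (3 * B) (by positivity) i j hij
  refine ⟨K * (1 + B), by positivity, fun u hu h0 t ht => ?_⟩
  have h1 := h1 u hu h0
  have X := fun i j => W_contx hu.sm i j t
  have : ∫ x in (0:ℝ)..1, ‖W u i j x t‖^2 ≤ ∫ x in (0:ℝ)..1, K * (1 + ‖W u 0 N x t‖^2) := by
    apply intervalIntegral.integral_mono_on zero_le_one (Continuous.intervalIntegrable (by fun_prop) _ _) (Continuous.intervalIntegrable (by fun_prop) _ _)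
    intro x hx
    refine (h2 T hT u hu x hx t ht fun l hl => ?_).1
    have := nn_sob hu.sm l t x hx
    have := h1 l hl.le t ht
    have := h1 (l+1) hl t ht
    linarith
  rw [intervalIntegral.integral_const_mul, intervalIntegral.integral_add (by simp) (Continuous.intervalIntegrable (by fun_prop) _ _)] at this
  have h3 := h1 N le_rfl t ht
  unfold nn at h3
  simp only [intervalIntegral.integral_const, sub_zero, one_smul] at this
  refine this.trans ?_
  gcongr

theorem higher_order_estimates_schrodinger_flow :
    ∀ k : ℕ, 2 ≤ k →
      ∃ C : ℝ → ℝ → ℝ, ∀ T > (0:ℝ), ∀ u : ℝ → ℝ → E3, IsSol T u →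
        ∀ i : ℕ, i ≤ k → ∀ t ∈ Icc (0:ℝ) T,
          Hsq (2 * (k - i) + 1) (fun x => (pdt^[i] u) x t)
            ≤ C (Hsq (2 * k + 1) (fun x => u x 0)) T := by
  intro k _
  have main : ∀ A T : ℝ, ∃ K : ℝ, 0 < T → 0 ≤ A → ∀ i ≤ k, ∀ j ≤ 2 * (k - i) + 1, ∀ u, IsSol T u →
      (∀ j ≤ 2 * k + 1, nn u j 0 ≤ A) → ∀ t ∈ Icc (0:ℝ) T, ∫ x in (0:ℝ)..1, ‖W u i j x t‖^2 ≤ K := by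
    intro A T
    by_cases hT : 0 < T
    swap
    · exact ⟨0, fun h => absurd h hT⟩
    by_cases hA : 0 ≤ A
    swap
    · exact ⟨0, fun _ h => absurd h hA⟩
    have : ∀ i j, ∃ K, 0 ≤ K ∧ (2 * i + j ≤ 2 * k + 1 → ∀ u, IsSol T u → (∀ j ≤ 2 * k + 1, nn u j 0 ≤ A) → ∀ t ∈ Icc (0:ℝ) T,
      ∫ x in (0:ℝ)..1, ‖W u i j x t‖^2 ≤ K) := by
      intro i j
      by_cases h : 2 * i + j ≤ 2 * k + 1
      · obtain ⟨K, hK, hh⟩ := mixed (2 * k + 1) (by omega) A hA T hT i j h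
        exact ⟨K, hK, fun _ => hh⟩
      · exact ⟨0, le_rfl, fun h' => absurd h' h⟩
    choose K hK hh using this
    refine ⟨∑ i ∈ Finset.range (k+1), ∑ j ∈ Finset.range (2*k+2), K i j, fun _ _ i hi j hj u hu h0 t ht => ?_⟩
    refine (hh i j (by omega) u hu h0 t ht).trans ?_
    calc K i j ≤ ∑ j ∈ Finset.range (2*k+2), K i j :=
          Finset.single_le_sum (f := fun j => K i j) (fun _ _ => hK _ _) (Finset.mem_range.2 (by omega))
      _ ≤ _ := Finset.single_le_sum (f := fun i => ∑ j ∈ Finset.range (2*k+2), K i j)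
          (fun _ _ => Finset.sum_nonneg fun _ _ => hK _ _) (Finset.mem_range.2 (by omega))
  choose C hC using main
  refine ⟨fun A T => (2 * k + 2) * |C A T|, fun T hT u hu i hi t ht => ?_⟩
  have e0 := Hsq_eq u (2 * k + 1) 0 0
  simp only [Function.iterate_zero, id] at e0
  set A := Hsq (2 * k + 1) (fun x => u x 0) with hAdef
  have hle : ∀ j ≤ 2 * k + 1, nn u j 0 ≤ A := by
    intro j hj
    rw [e0]
    exact Finset.single_le_sum (f := fun j => nn u j 0) (fun _ _ => nn_nonneg _ _ _) (Finset.mem_range.2 (by omega))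
  have hA : 0 ≤ A := (nn_nonneg u 0 0).trans (hle 0 (by omega))
  rw [Hsq_eq]
  have := Finset.sum_le_card_nsmul (Finset.range (2 * (k - i) + 1 + 1)) (fun j => ∫ x in (0:ℝ)..1, ‖W u i j x t‖^2) |C A T|
    (fun j hj => (hC A T hT hA i hi j (by have := Finset.mem_range.1 hj; omega) u hu hle t ht).trans (le_abs_self _))
  refine this.trans ?_
  rw [Finset.card_range, nsmul_eq_mul]
  have : ((2 * (k - i) + 1 + 1 : ℕ) : ℝ) ≤ 2 * k + 2 := by
    have : 2 * (k - i) + 1 + 1 ≤ 2 * k + 2 := by omega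
    exact_mod_cast this
  exact mul_le_mul_of_nonneg_right this (abs_nonneg _)



end
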